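/- arXiv:1609.03395 — 2 statements merged into one kernel-verified Lean document; each statement's English description precedes it below -/
import Mathlib

section
/- Let c be a nonnegative integer and let n ≥ 1 be an integer with c ≥ n − 1. Then the underlying undirected graph of the finite constant Jaco graph J_n(f) with incidence function f(x) = c is the complete graph K_n. -/
/-- In-degree of vertex `v_j` in the (root) Jaco graph with incidence function `f`:
`d⁻(v_j) = |{ i : 1 ≤ i < j, i + f i − d⁻(v_i) ≥ j }|`. -/
noncomputable def jacoIn (f : ℕ → ℕ) (j : ℕ) : ℕ :=
  Nat.strongRecOn j (fun j ih =>
    (((Finset.Ico 1 j).attach).filter (fun i : {x // x ∈ Finset.Ico 1 j} =>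
      j ≤ i.1 + f i.1 - ih i.1 (Finset.mem_Ico.mp i.2).2)).card)

/-- The arc `(v_i, v_j)` is present in the Jaco graph iff `1 ≤ i < j` and
`i + f i − d⁻(v_i) ≥ j`. -/
def jacoArc (f : ℕ → ℕ) (i j : ℕ) : Prop :=
  1 ≤ i ∧ i < j ∧ j ≤ i + f i - jacoIn f i

noncomputable instance (f : ℕ → ℕ) (i j : ℕ) : Decidable (jacoArc f i j) := by
  unfold jacoArc; infer_instance

/-- The underlying undirected simple graph `J*_n(f)` of the finite Jaco graph `J_n(f)`,
on vertex set `{v_1, …, v_n}` (vertex `x : Fin n` represents `v_{x+1}`). -/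
def jacoGraph (f : ℕ → ℕ) (n : ℕ) : SimpleGraph (Fin n) :=
  SimpleGraph.fromRel (fun x y => jacoArc f (x.1 + 1) (y.1 + 1))

noncomputable instance (f : ℕ → ℕ) (n : ℕ) : DecidableRel (jacoGraph f n).Adj := fun x y =>
  decidable_of_iff
    (x ≠ y ∧ (jacoArc f (x.1 + 1) (y.1 + 1) ∨ jacoArc f (y.1 + 1) (x.1 + 1)))
    (by unfold jacoGraph; exact (SimpleGraph.fromRel_adj (fun a b : Fin n => jacoArc f (a.1 + 1) (b.1 + 1)) x y).symm)

theorem jacoIn_le_pred (f : ℕ → ℕ) (j : ℕ) : jacoIn f j ≤ j - 1 := by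
  unfold jacoIn
  rw [Nat.strongRecOn_eq]
  refine (Finset.card_filter_le _ _).trans ?_
  simp

/-- If `c ≥ n − 1` (and `n ≥ 1`), the underlying graph of the finite
constant Jaco graph `J_n(f)` with `f(x) = c` is the complete graph `K_n`. -/
theorem constant_jaco_graph_complete (c n : ℕ) (hn : 1 ≤ n) (hc : n - 1 ≤ c) :
    jacoGraph (fun _ => c) n = (⊤ : SimpleGraph (Fin n)) := by
  ext x y
  unfold jacoGraph
  rw [SimpleGraph.fromRel_adj, SimpleGraph.top_adj]
  refine ⟨fun h => h.1, fun h => ⟨h, ?_⟩⟩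
  have hne : x.1 ≠ y.1 := fun e => h (Fin.ext e)
  have hx := x.2
  have hy := y.2
  have h1 := jacoIn_le_pred (fun _ => c) (x.1 + 1)
  have h2 := jacoIn_le_pred (fun _ => c) (y.1 + 1)
  unfold jacoArc
  beta_reduce
  omega
end

section
/- Let f(x) = x². If for some n ∈ ℕ the in-degrees in the root q-Jaco graph satisfy d⁻(v_n) = d⁻(v_{n+1}), then the Jaconian sets of J_n(x²) and J_{n+1}(x²) have different cardinalities: |𝒥(J_n(x²))| ≠ |𝒥(J_{n+1}(x²))|. -/
/-- Unfolded recursion for the in-degree. -/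
theorem jacoIn_eq (f : ℕ → ℕ) (j : ℕ) :
    jacoIn f j = ((Finset.Ico 1 j).filter (fun i => j ≤ i + f i - jacoIn f i)).card := by
  have h1 : jacoIn f j = (((Finset.Ico 1 j).attach).filter
      (fun i : {x // x ∈ Finset.Ico 1 j} => j ≤ i.1 + f i.1 - jacoIn f i.1)).card := by
    conv_lhs => unfold jacoIn
    rw [Nat.strongRecOn_eq]
    rfl
  rw [h1, ← Finset.card_map (Function.Embedding.subtype _)]
  congr 1
  ext x
  simp only [Finset.mem_map, Finset.mem_filter, Finset.mem_attach, true_and,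
    Function.Embedding.coe_subtype, Subtype.exists, exists_and_left, exists_prop]
  constructor
  · rintro ⟨a, h2, h3, rfl⟩
    exact ⟨h3, h2⟩
  · rintro ⟨h2, h3⟩
    exact ⟨x, h3, h2, rfl⟩

/-- In-degree for the square function. -/
noncomputable def qd (j : ℕ) : ℕ := jacoIn (fun x => x ^ 2) j

/-- The reach of a vertex. -/
noncomputable def qr (i : ℕ) : ℕ := i + i ^ 2 - qd i

theorem qd_eq (j : ℕ) : qd j = ((Finset.Ico 1 j).filter (fun i => j ≤ qr i)).card :=
  jacoIn_eq _ j

theorem qd_le (j : ℕ) : qd j ≤ j - 1 := by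
  rw [qd_eq]
  refine (Finset.card_filter_le _ _).trans ?_
  simp

theorem qr_add (i : ℕ) : qr i + qd i = i + i ^ 2 := by
  have := qd_le i
  unfold qr
  omega

theorem lt_qr (i : ℕ) (hi : 1 ≤ i) : i < qr i := by
  have h1 := qd_le i
  have h2 := qr_add i
  have h3 : i ≤ i ^ 2 := by nlinarith
  omega

theorem qd_succ_le (j : ℕ) : qd (j + 1) ≤ qd j + 1 := by
  rw [qd_eq (j + 1), qd_eq j]
  refine le_trans (Finset.card_le_card ?_) (Finset.card_insert_le j _)
  intro x hx
  simp only [Finset.mem_filter, Finset.mem_Ico, Finset.mem_insert] at hx ⊢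
  omega

theorem qr_strictMono : StrictMono qr := by
  refine strictMono_nat_of_lt_succ fun i => ?_
  have h1 := qd_succ_le i
  have h2 := qr_add i
  have h3 := qr_add (i + 1)
  nlinarith

theorem qd_succ_of_qr (k : ℕ) (hk : 1 ≤ k) : qd (qr k + 1) = qd (qr k) := by
  have hlt := lt_qr k hk
  have hr := lt_qr (qr k) (by omega)
  have e : insert k ((Finset.Ico 1 (qr k + 1)).filter (fun i => qr k + 1 ≤ qr i))
      = insert (qr k) ((Finset.Ico 1 (qr k)).filter (fun i => qr k ≤ qr i)) := by
    ext x
    have h1 : qr x = qr k ↔ x = k := qr_strictMono.injective.eq_iff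
    simp only [Finset.mem_filter, Finset.mem_Ico, Finset.mem_insert]
    by_cases h2 : x = qr k
    · subst h2; omega
    · omega
  have e2 := congrArg Finset.card e
  rw [Finset.card_insert_of_notMem (by simp), Finset.card_insert_of_notMem (by simp),
    ← qd_eq, ← qd_eq] at e2
  omega

theorem qd_succ_of_not (j : ℕ) (hj : 1 ≤ j) (h : ¬ ∃ k, 1 ≤ k ∧ qr k = j) :
    qd (j + 1) = qd j + 1 := by
  have hr := lt_qr j hj
  have e : ((Finset.Ico 1 (j + 1)).filter (fun i => j + 1 ≤ qr i))
      = insert j ((Finset.Ico 1 j).filter (fun i => j ≤ qr i)) := by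
    ext x
    have h1 : 1 ≤ x → qr x ≠ j := fun h2 h3 => h ⟨x, h2, h3⟩
    simp only [Finset.mem_filter, Finset.mem_Ico, Finset.mem_insert]
    by_cases h2 : x = j
    · subst h2; omega
    · omega
  rw [qd_eq (j + 1), e, Finset.card_insert_of_notMem (by simp), ← qd_eq]

theorem qd_lip (i t : ℕ) : qd (i + t) ≤ qd i + t := by
  induction t with
  | zero => simp
  | succ t ih => have := qd_succ_le (i + t); rw [← add_assoc]; omega

theorem qd_le_succ (j : ℕ) : qd j ≤ qd (j + 1) := by
  rcases Nat.eq_zero_or_pos j with rfl | hj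
  · have := qd_le 0; omega
  · by_cases h : ∃ k, 1 ≤ k ∧ qr k = j
    · obtain ⟨k, hk, rfl⟩ := h
      exact (qd_succ_of_qr k hk).ge
    · have := qd_succ_of_not j hj h
      omega

/-- Degree of vertex `i` in the graph on `n` vertices. -/
noncomputable def qD (n i : ℕ) : ℕ := qd i + (min (qr i) n - i)

theorem degree_eq (n : ℕ) (v : Fin n) :
    (jacoGraph (fun x => x ^ 2) n).degree v = qD n (v.1 + 1) := by
  have harc : ∀ i j, jacoArc (fun x => x ^ 2) i j ↔ 1 ≤ i ∧ i < j ∧ j ≤ qr i :=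
    fun i j => Iff.rfl
  have hadj : ∀ w : Fin n, (jacoGraph (fun x => x ^ 2) n).Adj v w ↔ v ≠ w ∧
      (jacoArc (fun x => x ^ 2) (v.1 + 1) (w.1 + 1) ∨
        jacoArc (fun x => x ^ 2) (w.1 + 1) (v.1 + 1)) :=
    fun w => SimpleGraph.fromRel_adj _ v w
  have hinj : Function.Injective (fun w : Fin n => w.1 + 1) := by
    intro a b hab
    apply Fin.ext
    simpa using hab
  have himg : ((jacoGraph (fun x => x ^ 2) n).neighborFinset v).image (fun w : Fin n => w.1 + 1)
      = ((Finset.Ico 1 (v.1 + 1)).filter (fun i => v.1 + 1 ≤ qr i)) ∪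
        Finset.Ioc (v.1 + 1) (min (qr (v.1 + 1)) n) := by
    ext x
    simp only [Finset.mem_image, SimpleGraph.mem_neighborFinset, hadj, harc, Finset.mem_union, Finset.mem_filter, Finset.mem_Ico,
      Finset.mem_Ioc, le_min_iff]
    have hv := v.2
    constructor
    · rintro ⟨w, ⟨h1, h2⟩, rfl⟩
      have hw := w.2
      omega
    · intro hx
      have hx1 : 1 ≤ x := by omega
      have hxn : x ≤ n := by omega
      have e : x - 1 + 1 = x := by omega
      refine ⟨⟨x - 1, by omega⟩, ⟨?_, ?_⟩, e⟩
      · intro hh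
        have := congrArg Fin.val hh
        simp only at this
        omega
      · simp only [e]
        omega
  rw [← SimpleGraph.card_neighborFinset_eq_degree, ← Finset.card_image_of_injective _ hinj, himg,
    Finset.card_union_of_disjoint, ← qd_eq, Nat.card_Ioc]
  · rfl
  · rw [Finset.disjoint_left]
    intro x h1 h2
    simp only [Finset.mem_filter, Finset.mem_Ico, Finset.mem_Ioc] at h1 h2
    omega

theorem jaconian_card (n M i : ℕ) (hi : 1 ≤ i) (hin : i ≤ n) (hM : qD n i = M)
    (hle : ∀ j, 1 ≤ j → j ≤ n → qD n j ≤ M) :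
    (Finset.univ.filter (fun v : Fin n =>
        (jacoGraph (fun x => x ^ 2) n).degree v =
          (jacoGraph (fun x => x ^ 2) n).maxDegree)).card =
      ((Finset.Icc 1 n).filter (fun j => qD n j = M)).card := by
  have hmax : (jacoGraph (fun x => x ^ 2) n).maxDegree = M := by
    apply le_antisymm
    · apply SimpleGraph.maxDegree_le_of_forall_degree_le
      intro v
      rw [degree_eq]
      exact hle _ (by omega) (by have := v.2; omega)
    · have h1 := SimpleGraph.degree_le_maxDegree (jacoGraph (fun x => x ^ 2) n) ⟨i - 1, by omega⟩
      rw [degree_eq] at h1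
      simp only [Nat.sub_add_cancel hi] at h1
      omega
  have hinj : Function.Injective (fun w : Fin n => w.1 + 1) := by
    intro a b hab
    apply Fin.ext
    simpa using hab
  rw [← Finset.card_image_of_injective _ hinj]
  congr 1
  ext x
  simp only [hmax, degree_eq, Finset.mem_image, Finset.mem_filter, Finset.mem_univ, true_and,
    Finset.mem_Icc]
  constructor
  · rintro ⟨w, h1, rfl⟩
    exact ⟨⟨by omega, by have := w.2; omega⟩, h1⟩
  · rintro ⟨⟨h1, h2⟩, h3⟩
    have e : x - 1 + 1 = x := by omega
    exact ⟨⟨x - 1, by omega⟩, by simpa only [e] using h3, e⟩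

theorem qD_of_le (n i : ℕ) (hi : 1 ≤ i) (h : qr i ≤ n) : qD n i = i ^ 2 := by
  have h1 := lt_qr i hi
  have h2 := qr_add i
  unfold qD
  rw [min_eq_left h]
  omega

theorem qD_of_ge (n i : ℕ) (hin : i ≤ n) (h : n ≤ qr i) : qD n i + i = qd i + n := by
  unfold qD
  rw [min_eq_right h]
  omega

/-- For `f(x) = x²`: if `d⁻(v_n) = d⁻(v_{n+1})` for some `n ∈ ℕ`
(`n ≥ 1`), then the Jaconian sets (sets of vertices of maximum degree) of
`J_n(x²)` and `J_{n+1}(x²)` have different cardinalities. -/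
theorem qJaco_sq_jaconian_card_changes (n : ℕ) (hn : 1 ≤ n)
    (h : jacoIn (fun x => x ^ 2) n = jacoIn (fun x => x ^ 2) (n + 1)) :
    (Finset.univ.filter (fun v : Fin n =>
        (jacoGraph (fun x => x ^ 2) n).degree v =
          (jacoGraph (fun x => x ^ 2) n).maxDegree)).card ≠
    (Finset.univ.filter (fun v : Fin (n + 1) =>
        (jacoGraph (fun x => x ^ 2) (n + 1)).degree v =
          (jacoGraph (fun x => x ^ 2) (n + 1)).maxDegree)).card := by
  have hex : ∃ k, 1 ≤ k ∧ qr k = n := by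
    by_contra hne
    have h1 := qd_succ_of_not n hn hne
    change qd n = qd (n + 1) at h
    omega
  obtain ⟨k, hk, rfl⟩ := hex
  change qd (qr k) = qd (qr k + 1) at h
  have hkn := lt_qr k hk
  have hadd := qr_add k
  have hlow : ∀ m i, 1 ≤ i → i ≤ k → qr k ≤ m → qD m i = i ^ 2 := fun m i h1 h2 h3 =>
    qD_of_le m i h1 ((qr_strictMono.monotone h2).trans h3)
  have hsq : ∀ i, i < k → i ^ 2 < k ^ 2 := fun i hi => Nat.pow_lt_pow_left hi (by norm_num)
  have hhigh : ∀ i, k ≤ i → i ≤ qr k → qD (qr k) i + i = qd i + qr k := fun i h1 h2 =>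
    qD_of_ge _ i h2 (qr_strictMono.monotone h1)
  have hhigh' : ∀ i, k + 1 ≤ i → i ≤ qr k + 1 →
      qD (qr k + 1) i + i = qd i + (qr k + 1) := fun i h1 h2 =>
    qD_of_ge _ i h2 (qr_strictMono (by omega : k < i))
  have hlip : ∀ i j, i ≤ j → qd j + i ≤ qd i + j := by
    intro i j hij
    have h1 := qd_lip i (j - i)
    rw [Nat.add_sub_cancel' hij] at h1
    omega
  have hs1 := qd_succ_le k
  have hs2 := qd_le_succ k
  have hk1 := hhigh' (k + 1) le_rfl (by omega)
  rw [jaconian_card (qr k) (k ^ 2) k hk hkn.le (hlow _ k hk le_rfl le_rfl) (by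
    intro j h1 h2
    rcases lt_or_ge j k with h3 | h3
    · rw [hlow _ j h1 h3.le le_rfl]
      exact (hsq j h3).le
    · have h4 := hhigh j h3 h2
      have h5 := hlip k j h3
      omega)]
  rcases (by omega : qd (k + 1) = qd k + 1 ∨ qd (k + 1) = qd k) with hc | hc
  · rw [jaconian_card (qr k + 1) (k ^ 2 + 1) (k + 1) (by omega) (by omega) (by omega) (by
      intro j h1 h2
      rcases lt_or_ge k j with h3 | h3
      · have h4 := hhigh' j h3 h2
        have h5 := hlip (k + 1) j h3
        omega
      · rw [hlow _ j h1 h3 (by omega)]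
        have := Nat.pow_le_pow_left h3 2
        omega)]
    have e : (Finset.Icc 1 (qr k + 1)).filter (fun j => qD (qr k + 1) j = k ^ 2 + 1) =
        ((Finset.Icc 1 (qr k)).filter (fun j => qD (qr k) j = k ^ 2)).erase k := by
      ext x
      simp only [Finset.mem_filter, Finset.mem_Icc, Finset.mem_erase]
      rcases lt_or_ge k x with h3 | h3
      · rcases eq_or_ne x (qr k + 1) with rfl | h4
        · have h5 := hhigh' _ h3 le_rfl
          have h6 := hlip k (qr k) hkn.le
          omega
        · have h5 := hhigh x h3.le
          have h6 := hhigh' x h3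
          omega
      · have h5 := Nat.pow_le_pow_left h3 2
        rcases eq_or_lt_of_le h3 with rfl | h4
        · have h6 := hlow (qr x + 1) x hk le_rfl (by omega)
          omega
        · have h6 := hlow (qr k + 1) x
          have h7 := hlow (qr k) x
          have h8 := hsq x h4
          omega
    have hmem : k ∈ (Finset.Icc 1 (qr k)).filter (fun j => qD (qr k) j = k ^ 2) := by
      simp only [Finset.mem_filter, Finset.mem_Icc]
      exact ⟨⟨hk, hkn.le⟩, hlow _ k hk le_rfl le_rfl⟩
    rw [e]
    exact (Finset.card_erase_lt_of_mem hmem).ne'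
  · have hkk := hlow (qr k + 1) k hk le_rfl (by omega)
    rw [jaconian_card (qr k + 1) (k ^ 2) k hk (by omega) hkk (by
      intro j h1 h2
      rcases lt_or_ge k j with h3 | h3
      · have h4 := hhigh' j h3 h2
        have h5 := hlip (k + 1) j h3
        omega
      · rw [hlow _ j h1 h3 (by omega)]
        exact Nat.pow_le_pow_left h3 2)]
    have e : (Finset.Icc 1 (qr k)).filter (fun j => qD (qr k) j = k ^ 2) ⊆ {k} := by
      intro x
      simp only [Finset.mem_filter, Finset.mem_Icc, Finset.mem_singleton]
      rintro ⟨⟨h1, h2⟩, h3⟩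
      rcases lt_trichotomy x k with h4 | h4 | h4
      · have h5 := hlow (qr k) x h1 h4.le le_rfl
        have h6 := hsq x h4
        omega
      · exact h4
      · have h5 := hhigh x h4.le h2
        have h6 := hlip (k + 1) x h4
        omega
    have e2 : ({k, k + 1} : Finset ℕ) ⊆
        (Finset.Icc 1 (qr k + 1)).filter (fun j => qD (qr k + 1) j = k ^ 2) := by
      intro x
      simp only [Finset.mem_filter, Finset.mem_Icc, Finset.mem_insert, Finset.mem_singleton]
      rintro (rfl | rfl)
      · omega
      · omega
    have c1 := Finset.card_le_card e
    have c2 := Finset.card_le_card e2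
    rw [Finset.card_singleton] at c1
    rw [Finset.card_pair (by omega)] at c2
    omega
end
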